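/- arXiv:1203.2131 — 2 statements merged into one kernel-verified Lean document; each statement's English description precedes it below -/
import Mathlib

section
/- Let n ≥ 2, let H = {x ∈ ℝⁿ : x₀ = 0}, let o ∈ H, r > 0 and h > 0. Then the image of the hyperplane {x ∈ ℝⁿ : x₀ = h} under the inversion ι_{o,r} is S(r²/h, o) \ {o}, where S(φ,t) denotes the sphere with center t + (φ/2)e₀ and radius φ/2 (e₀ the first standard basis vector). (Thus a kissing hyperplane at distance h maps to a kissing sphere of diameter r²/h tangent at o, punctured at the center of inversion.) -/
/-! With the convention `ι o = o` (forced here by division by zero), the inversion with center `o`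
is an involution of the whole space, so a point `y` lies in the image of the plane
`{x₀ = h}` exactly when `ι y` lies in the plane. With `v = y - o`, this says
`(r² / ‖v‖²) v₀ = h`; for `v ≠ 0` it is equivalent to `‖v‖² = (r² / h) v₀`, which is the equation
of the sphere of diameter `r² / h` tangent at `o` (`mem_kissing_sphere_iff`). For `v = 0` the left
side is `0 ≠ h`, which accounts for the puncture. -/

/-- The inversion with center `o` and radius `r`. -/
noncomputable def inversion {n : ℕ} (o : EuclideanSpace ℝ (Fin n)) (r : ℝ)
    (x : EuclideanSpace ℝ (Fin n)) : EuclideanSpace ℝ (Fin n) :=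
  o + (r ^ 2 / ‖x - o‖ ^ 2) • (x - o)

theorem inversion_eq_euclidean {n : ℕ} (o : EuclideanSpace ℝ (Fin n)) (r : ℝ) :
    inversion o r = EuclideanGeometry.inversion o r := by
  funext x
  simp [inversion, EuclideanGeometry.inversion, dist_eq_norm, div_pow, add_comm]

/-- Expanding the square in the equation of the sphere cancels its constant term, since the sphere
passes through `o`. -/
theorem mem_kissing_sphere_iff {n : ℕ} (i : Fin n) (o y : EuclideanSpace ℝ (Fin n))
    {d : ℝ} (hd : 0 ≤ d) :
    y ∈ Metric.sphere (o + (d / 2) • EuclideanSpace.single i (1 : ℝ)) (d / 2) ↔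
      ‖y - o‖ ^ 2 = d * (y - o) i := by
  have hd2 : 0 ≤ d / 2 := by positivity
  rw [mem_sphere_iff_norm, ← sub_sub, ← sq_eq_sq₀ (norm_nonneg _) hd2, norm_sub_sq_real,
    inner_smul_right, EuclideanSpace.inner_single_right, norm_smul, mul_pow]
  simp only [EuclideanSpace.norm_single, norm_one, Real.norm_eq_abs, sq_abs, one_mul,
    conj_trivial]
  constructor <;> intro h <;> linarith

/-- the image of the hyperplane `{x₀ = h}` (`h > 0`) under the inversion
`ι_{o,r}` with `o` on the hyperplane `{x₀ = 0}` is the kissing sphere of diameter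
`r²/h` tangent at `o`, punctured at the center of inversion `o`. -/
theorem kissing_plane_inversion (n : ℕ) (hn : 2 ≤ n)
    (o : EuclideanSpace ℝ (Fin n)) (ho : o ⟨0, by omega⟩ = 0)
    (r h : ℝ) (hr : 0 < r) (hh : 0 < h) :
    (inversion o r) '' {x : EuclideanSpace ℝ (Fin n) | x ⟨0, by omega⟩ = h} =
      Metric.sphere
          (o + ((r ^ 2 / h) / 2) • EuclideanSpace.single (⟨0, by omega⟩ : Fin n) (1 : ℝ))
          ((r ^ 2 / h) / 2) \ {o} := by
  rw [inversion_eq_euclidean,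
    Set.image_eq_preimage_of_inverse (EuclideanGeometry.inversion_involutive o hr.ne')
      (EuclideanGeometry.inversion_involutive o hr.ne'), ← inversion_eq_euclidean]
  ext y
  have hd : 0 ≤ r ^ 2 / h := by positivity
  rw [Set.mem_diff, mem_kissing_sphere_iff _ _ _ hd, Set.mem_singleton_iff, Set.mem_preimage,
    Set.mem_setOf_eq]
  have key : inversion o r y ⟨0, by omega⟩ =
      r ^ 2 / ‖y - o‖ ^ 2 * (y - o) ⟨0, by omega⟩ := by
    simp [inversion, ho]
  rw [key]
  by_cases hy : y = o
  · simp [hy, hh.ne]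
  · have hn0 : ‖y - o‖ ^ 2 ≠ 0 := pow_ne_zero _ (norm_ne_zero_iff.2 (sub_ne_zero.2 hy))
    rw [and_iff_left hy, div_mul_eq_mul_div, div_mul_eq_mul_div, div_eq_iff hn0,
      eq_div_iff hh.ne', mul_comm h]
    exact eq_comm
end

section
/- Let n ≥ 2. The map Ψ is a bijection from 𝕂ⁿ onto the future lightcone 𝕃ⁿ₊ = {x ∈ ℝ^{n+1} : ⟨x,x⟩_{n,1} = 0 and x_n > 0}. (Together with the isometry property of Ψ, this shows that (𝕂ⁿ, d_K) is isometric to (𝕃ⁿ₊, d_M) where d_M(x,y)² = −⟨x,y⟩_{n,1}.) -/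
/-!
The coordinate sum `s = x₀ + x_n` of a point `x = Ψ K` equals `√2 / φ > 0` for a sphere of
diameter `φ` and `0` for a hyperplane. It therefore separates spheres from hyperplanes and
determines `φ`; the middle coordinates then determine `t`, and `x_n` determines the height `h`.

Conversely, a point of the future lightcone satisfies `∑ xᵢ² = (x_n - x₀) (x_n + x₀)` over the
middle coordinates, and `s ≥ 0`. If `s > 0`, the sphere with `φ = √2 / s` and `tᵢ = xᵢ / s` has
`‖t‖² = (x_n - x₀) / s` and is mapped to `x`. If `s = 0`, the middle coordinates vanish and `x` is
the image of the hyperplane at height `√2 x_n`.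

The dimension is written `n = m + 1`, so that the middle coordinates are the `i.succ.castSucc`
with `i : Fin m`.
-/

/-- A kissing sphere in `ℝⁿ`: either a sphere of diameter `φ > 0` in the half-space
`x₀ ≥ 0` tangent to the hyperplane `x₀ = 0` at `t ∈ ℝ^{n−1}`, or the hyperplane
`x₀ = h` for some `h > 0`. -/
inductive KSphere (n : ℕ) where
  | sphere (φ : ℝ) (t : EuclideanSpace ℝ (Fin (n - 1))) (hφ : 0 < φ) : KSphere n
  | plane (h : ℝ) (hh : 0 < h) : KSphere n

/-- The distance `d_K` between kissing spheres. -/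
noncomputable def dK {n : ℕ} : KSphere n → KSphere n → ℝ
  | .sphere φ t _, .sphere φ' t' _ => ‖t - t'‖ / Real.sqrt (φ * φ')
  | .sphere φ _ _, .plane h _ => Real.sqrt (h / φ)
  | .plane h _, .sphere φ _ _ => Real.sqrt (h / φ)
  | .plane _ _, .plane _ _ => 0

/-- The Minkowski inner product of signature `(n,1)` on `ℝ^{n+1}`:
`⟨x,y⟩ = x₀y₀ + … + x_{n−1}y_{n−1} − x_n y_n`. -/
def mink (n : ℕ) (x y : Fin (n + 1) → ℝ) : ℝ :=
  (∑ i : Fin n, x i.castSucc * y i.castSucc) - x (Fin.last n) * y (Fin.last n)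

/-- The map `Ψ : 𝕂ⁿ → ℝ^{n+1}`, sending a kissing sphere `(φ,t)` to
`(√2/(2φ))·(1 − ‖t‖², 2t, 1 + ‖t‖²)` and a kissing hyperplane `h` to
`(√2/2)·(−h, 0, …, 0, h)`. -/
noncomputable def Psi {n : ℕ} : KSphere n → (Fin (n + 1) → ℝ)
  | .sphere φ t _ => fun i =>
      (Real.sqrt 2 / (2 * φ)) *
        (if _h0 : (i : ℕ) = 0 then 1 - ‖t‖ ^ 2
         else if _hn : (i : ℕ) = n then 1 + ‖t‖ ^ 2
         else 2 * t ⟨(i : ℕ) - 1, by have := i.isLt; omega⟩)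
  | .plane h _ => fun i =>
      (Real.sqrt 2 / 2) *
        (if (i : ℕ) = 0 then -h else if (i : ℕ) = n then h else 0)

theorem Psi_sphere_zero {m : ℕ} (φ : ℝ) (t : EuclideanSpace ℝ (Fin (m + 1 - 1))) (hφ : 0 < φ) :
    Psi (.sphere φ t hφ : KSphere (m + 1)) 0 = Real.sqrt 2 / (2 * φ) * (1 - ‖t‖ ^ 2) := by
  simp [Psi]

theorem Psi_sphere_last {m : ℕ} (φ : ℝ) (t : EuclideanSpace ℝ (Fin (m + 1 - 1))) (hφ : 0 < φ) :
    Psi (.sphere φ t hφ : KSphere (m + 1)) (Fin.last (m + 1)) =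
      Real.sqrt 2 / (2 * φ) * (1 + ‖t‖ ^ 2) := by
  simp [Psi]

theorem Psi_sphere_mid {m : ℕ} (φ : ℝ) (t : EuclideanSpace ℝ (Fin (m + 1 - 1))) (hφ : 0 < φ)
    (i : Fin m) :
    Psi (.sphere φ t hφ : KSphere (m + 1)) i.succ.castSucc =
      Real.sqrt 2 / (2 * φ) * (2 * t i) := by
  have hi : (i : ℕ) ≠ m := i.isLt.ne
  simp [Psi, hi]

theorem Psi_plane_zero {m : ℕ} (h : ℝ) (hh : 0 < h) :
    Psi (.plane h hh : KSphere (m + 1)) 0 = Real.sqrt 2 / 2 * -h := by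
  simp [Psi]

theorem Psi_plane_last {m : ℕ} (h : ℝ) (hh : 0 < h) :
    Psi (.plane h hh : KSphere (m + 1)) (Fin.last (m + 1)) = Real.sqrt 2 / 2 * h := by
  simp [Psi]

theorem Psi_plane_mid {m : ℕ} (h : ℝ) (hh : 0 < h) (i : Fin m) :
    Psi (.plane h hh : KSphere (m + 1)) i.succ.castSucc = 0 := by
  have hi : (i : ℕ) ≠ m := i.isLt.ne
  simp [Psi, hi]

theorem mink_self_eq {m : ℕ} (x : Fin (m + 1 + 1) → ℝ) :
    mink (m + 1) x x =
      x 0 ^ 2 + ∑ i : Fin m, x i.succ.castSucc ^ 2 - x (Fin.last (m + 1)) ^ 2 := by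
  simp only [mink, Fin.sum_univ_succ, Fin.castSucc_zero, pow_two]

theorem funext_coords {m : ℕ} {x y : Fin (m + 1 + 1) → ℝ} (h0 : x 0 = y 0)
    (hmid : ∀ i : Fin m, x i.succ.castSucc = y i.succ.castSucc)
    (hlast : x (Fin.last (m + 1)) = y (Fin.last (m + 1))) : x = y := by
  funext j
  refine Fin.lastCases hlast (fun j => ?_) j
  exact Fin.cases h0 hmid j

/-- The coordinate sum `x₀ + x_n` recovers the diameter of a sphere. -/
theorem Psi_sphere_zero_add_last {m : ℕ} (φ : ℝ) (t : EuclideanSpace ℝ (Fin (m + 1 - 1)))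
    (hφ : 0 < φ) :
    Psi (.sphere φ t hφ : KSphere (m + 1)) 0 +
      Psi (.sphere φ t hφ : KSphere (m + 1)) (Fin.last (m + 1)) = Real.sqrt 2 / φ := by
  rw [Psi_sphere_zero, Psi_sphere_last]
  field_simp
  ring

/-- Hyperplanes lie on the ray of the lightcone where `x₀ + x_n` vanishes. -/
theorem Psi_plane_zero_add_last {m : ℕ} (h : ℝ) (hh : 0 < h) :
    Psi (.plane h hh : KSphere (m + 1)) 0 +
      Psi (.plane h hh : KSphere (m + 1)) (Fin.last (m + 1)) = 0 := by
  rw [Psi_plane_zero, Psi_plane_last]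
  ring

theorem norm_sq_eq_sum {m : ℕ} (t : EuclideanSpace ℝ (Fin m)) : ‖t‖ ^ 2 = ∑ i, t i ^ 2 := by
  simp [EuclideanSpace.norm_sq_eq]

theorem Psi_mem_lightcone {m : ℕ} (K : KSphere (m + 1)) :
    mink (m + 1) (Psi K) (Psi K) = 0 ∧ 0 < Psi K (Fin.last (m + 1)) := by
  have h2 : 0 < Real.sqrt 2 := by positivity
  rw [mink_self_eq]
  cases K with
  | sphere φ t hφ =>
    have ht : ‖t‖ ^ 2 = ∑ i : Fin m, t i ^ 2 := norm_sq_eq_sum (m := m) t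
    simp only [Psi_sphere_zero, Psi_sphere_last, Psi_sphere_mid]
    refine ⟨?_, by positivity⟩
    simp only [mul_pow, ← Finset.mul_sum]
    rw [← ht]
    ring
  | plane h hh =>
    simp only [Psi_plane_zero, Psi_plane_last, Psi_plane_mid]
    refine ⟨?_, by positivity⟩
    simp

theorem Psi_injective {m : ℕ} : Function.Injective (Psi : KSphere (m + 1) → _) := by
  have h2 : 0 < Real.sqrt 2 := by positivity
  intro K K' hK
  have hs : Psi K 0 + Psi K (Fin.last (m + 1)) = Psi K' 0 + Psi K' (Fin.last (m + 1)) := by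
    rw [hK]
  cases K with
  | sphere φ t hφ =>
    cases K' with
    | sphere φ' t' hφ' =>
      rw [Psi_sphere_zero_add_last, Psi_sphere_zero_add_last] at hs
      obtain rfl : φ = φ' := by
        field_simp at hs
        exact hs.symm
      have ht : t = t' := by
        refine PiLp.ext fun i : Fin m => ?_
        have hi := congrFun hK i.succ.castSucc
        rw [Psi_sphere_mid, Psi_sphere_mid] at hi
        have hc : Real.sqrt 2 / (2 * φ) ≠ 0 := by positivity
        exact mul_left_cancel₀ two_ne_zero (mul_left_cancel₀ hc hi)
      rw [ht]
    | plane h hh =>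
      rw [Psi_sphere_zero_add_last, Psi_plane_zero_add_last] at hs
      exact absurd hs (by positivity)
  | plane h hh =>
    cases K' with
    | sphere φ t hφ =>
      rw [Psi_sphere_zero_add_last, Psi_plane_zero_add_last] at hs
      exact absurd hs.symm (by positivity)
    | plane h' hh' =>
      have hl := congrFun hK (Fin.last (m + 1))
      rw [Psi_plane_last, Psi_plane_last] at hl
      have hc : Real.sqrt 2 / 2 ≠ 0 := by positivity
      obtain rfl : h = h' := mul_left_cancel₀ hc hl
      rfl

theorem exists_Psi_eq {m : ℕ} (x : Fin (m + 1 + 1) → ℝ) (hx : mink (m + 1) x x = 0)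
    (hpos : 0 < x (Fin.last (m + 1))) : ∃ K : KSphere (m + 1), Psi K = x := by
  have h2 : 0 < Real.sqrt 2 := by positivity
  have hsq : Real.sqrt 2 * Real.sqrt 2 = 2 := Real.mul_self_sqrt (by norm_num)
  rw [mink_self_eq] at hx
  have hsum : 0 ≤ ∑ i : Fin m, x i.succ.castSucc ^ 2 := Finset.sum_nonneg fun i _ => sq_nonneg _
  have hs : 0 ≤ x 0 + x (Fin.last (m + 1)) := by
    have := neg_le_of_abs_le (abs_le_of_sq_le_sq (by linarith : x 0 ^ 2 ≤ _) hpos.le)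
    linarith
  rcases hs.lt_or_eq with hs | hs
  · have hs' := hs.ne'
    set s := x 0 + x (Fin.last (m + 1)) with hsdef
    let t : EuclideanSpace ℝ (Fin m) := WithLp.toLp 2 fun i => x i.succ.castSucc / s
    have ht : ‖t‖ ^ 2 = (x (Fin.last (m + 1)) - x 0) / s := by
      rw [norm_sq_eq_sum]
      simp only [t, div_pow, ← Finset.sum_div]
      rw [div_eq_div_iff (by positivity) hs']
      have : ∑ i : Fin m, x i.succ.castSucc ^ 2 = (x (Fin.last (m + 1)) - x 0) * s := by
        rw [hsdef]
        linarith
      rw [this]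
      ring
    have hc : Real.sqrt 2 / (2 * (Real.sqrt 2 / s)) = s / 2 := by
      field_simp
    refine ⟨.sphere (Real.sqrt 2 / s) t (by positivity), funext_coords ?_ (fun i => ?_) ?_⟩
    · rw [Psi_sphere_zero, hc]
      -- `Psi` types the norm over `Fin (m + 1 - 1)`, which is `Fin m` only up to unfolding.
      erw [ht]
      field_simp
      rw [hsdef]
      ring
    · rw [Psi_sphere_mid, hc]
      change s / 2 * (2 * (x i.succ.castSucc / s)) = _
      field_simp
    · rw [Psi_sphere_last, hc]
      erw [ht]
      field_simp
      rw [hsdef]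
      ring
  · have h0 : x 0 = -x (Fin.last (m + 1)) := by linarith
    have hz : ∑ i : Fin m, x i.succ.castSucc ^ 2 = 0 := by
      rw [h0] at hx
      linarith
    rw [Finset.sum_eq_zero_iff_of_nonneg fun i _ => sq_nonneg _] at hz
    refine ⟨.plane (Real.sqrt 2 * x (Fin.last (m + 1))) (by positivity),
      funext_coords ?_ (fun i => ?_) ?_⟩
    · rw [Psi_plane_zero, h0]
      linear_combination (-x (Fin.last (m + 1)) / 2) * hsq
    · rw [Psi_plane_mid]
      exact (pow_eq_zero_iff two_ne_zero |>.mp (hz i (Finset.mem_univ i))).symm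
    · rw [Psi_plane_last]
      linear_combination (x (Fin.last (m + 1)) / 2) * hsq

/-- `Ψ` is a bijection from `𝕂ⁿ` onto the future lightcone
`𝕃ⁿ₊ = {x ∈ ℝ^{n+1} : ⟨x,x⟩_{n,1} = 0, x_n > 0}`. -/
theorem Psi_bijective (n : ℕ) (hn : 2 ≤ n) :
    Set.BijOn (Psi : KSphere n → (Fin (n + 1) → ℝ)) Set.univ
      {x : Fin (n + 1) → ℝ | mink n x x = 0 ∧ 0 < x (Fin.last n)} := by
  obtain ⟨m, rfl⟩ : ∃ m, n = m + 1 := ⟨n - 1, by omega⟩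
  exact ⟨fun K _ => Psi_mem_lightcone K, Psi_injective.injOn,
    fun x ⟨hx, hpos⟩ => (exists_Psi_eq x hx hpos).imp fun _ hK => ⟨trivial, hK⟩⟩
end
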